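/- arXiv:1204.5637 — 2 statements merged into one kernel-verified Lean document; each statement's English description precedes it below -/
import Mathlib

section
/- Let n ≥ 1 be an integer and a > 0. Let X₁ and X₂ be independent random points uniformly distributed in the closed ball of radius a in ℝⁿ, and let D = |X₁ - X₂| be their Euclidean distance. Then for every real s > -n, E[(D/(2a))^s] = (n Γ(n+1)/Γ((n+1)/2)) · Γ((n+s+1)/2)/((n+s) Γ(n + s/2 + 1)). -/
open MeasureTheory ProbabilityTheory Real

/-- The uniform probability measure on the closed ball of radius `a` centered at the origin
in `ℝⁿ`: normalized Lebesgue measure restricted to the ball. -/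
noncomputable def uniformBall (n : ℕ) (a : ℝ) : Measure (EuclideanSpace ℝ (Fin n)) :=
  (volume (Metric.closedBall (0 : EuclideanSpace ℝ (Fin n)) a))⁻¹ •
    volume.restrict (Metric.closedBall (0 : EuclideanSpace ℝ (Fin n)) a)

/-!
By symmetry, the double integral of `dist x y ^ s` over the ball is twice its part over
`‖y‖ ≤ ‖x‖`. For fixed `x`, the substitution `z = x - y` turns that part into the integral of
`‖z‖ ^ s` over the ball of radius `‖x‖` centred at `x`; this ball has the origin on its boundary and
is `r ≤ 2 ⟨x, u⟩₊` in polar coordinates `z = r u`, so what remains is the moment of order `n + s`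
of `⟨x, u⟩₊` over the unit sphere. That moment comes from integrating `⟨x, z⟩₊ ^ p * exp (-‖z‖ ^ 2)`
once in polar coordinates and once over `ℝ x ⊕ (ℝ x)ᗮ`. It is proportional to `‖x‖ ^ (n + s)`, whose
integral over the ball is elementary, and Legendre's duplication formula simplifies the constant.
-/

open Module (finrank)
open Metric (sphere closedBall)
open scoped Submodule

theorem lintegral_lintegral_eq_two_mul_of_symm {α : Type*} [MeasurableSpace α] {ν : Measure α}
    [SFinite ν] {k : α → α → ENNReal} (hk : Measurable (Function.uncurry k))
    (hsymm : ∀ x y, k x y = k y x) {h : α → ℝ} (hh : Measurable h)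
    (hnull : ∀ c, ν {y | h y = c} = 0) :
    ∫⁻ x, ∫⁻ y, k x y ∂ν ∂ν = 2 * ∫⁻ x, ∫⁻ y in {y | h y ≤ h x}, k x y ∂ν ∂ν := by
  have hle (x : α) : MeasurableSet {y | h y ≤ h x} := measurableSet_le hh measurable_const
  have hlt (x : α) : MeasurableSet {y | h x < h y} := measurableSet_lt measurable_const hh
  have hmeas : Measurable fun x ↦ ∫⁻ y in {y | h y ≤ h x}, k x y ∂ν := by
    simp_rw [← lintegral_indicator (hle _)]
    exact (hk.indicator (measurableSet_le (hh.comp measurable_snd)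
      (hh.comp measurable_fst))).lintegral_prod_right'
  have hswap : ∫⁻ x, ∫⁻ y in {y | h x < h y}, k x y ∂ν ∂ν =
      ∫⁻ x, ∫⁻ y in {y | h y < h x}, k x y ∂ν ∂ν := by
    simp_rw [← lintegral_indicator (hlt _),
      ← lintegral_indicator (measurableSet_lt hh measurable_const)]
    rw [lintegral_lintegral_swap (f := fun x y ↦ Set.indicator {y | h x < h y} (k x) y)
      (hk.indicator (measurableSet_lt (hh.comp measurable_fst)
      (hh.comp measurable_snd))).aemeasurable]
    simp only [Set.indicator, Set.mem_ofPred_eq, hsymm]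
  have hae (x : α) : {y | h y < h x} =ᵐ[ν] {y | h y ≤ h x} := by
    filter_upwards [measure_eq_zero_iff_ae_notMem.1 (hnull (h x))] with y hy
    exact propext ⟨le_of_lt, fun hyx ↦ lt_of_le_of_ne hyx hy⟩
  calc ∫⁻ x, ∫⁻ y, k x y ∂ν ∂ν
      = ∫⁻ x, (∫⁻ y in {y | h y ≤ h x}, k x y ∂ν) + ∫⁻ y in {y | h x < h y}, k x y ∂ν ∂ν := by
        refine lintegral_congr fun x ↦ ?_
        rw [← lintegral_add_compl _ (hle x), Set.compl_ofPred]
        simp only [not_le]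
    _ = 2 * ∫⁻ x, ∫⁻ y in {y | h y ≤ h x}, k x y ∂ν ∂ν := by
        rw [lintegral_add_left hmeas, hswap, two_mul]
        simp_rw [setLIntegral_congr (hae _)]

theorem setLIntegral_Ioc_rpow {q c : ℝ} (hq : -1 < q) (hc : 0 ≤ c) :
    ∫⁻ r in Set.Ioc 0 c, ENNReal.ofReal (r ^ q) = ENNReal.ofReal (c ^ (q + 1) / (q + 1)) := by
  rw [← ofReal_integral_eq_lintegral_ofReal, ← intervalIntegral.integral_of_le hc,
    integral_rpow (Or.inl hq), zero_rpow (by linarith), sub_zero]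
  · exact (intervalIntegral.intervalIntegrable_rpow' hq).1
  · filter_upwards [ae_restrict_mem measurableSet_Ioc] with r hr
    exact rpow_nonneg hr.1.le _

theorem setLIntegral_Ioi_rpow_mul_exp_neg_sq {q : ℝ} (hq : -1 < q) :
    ∫⁻ t in Set.Ioi (0 : ℝ), ENNReal.ofReal (t ^ q * exp (-t ^ 2)) =
      ENNReal.ofReal (Gamma ((q + 1) / 2) / 2) := by
  have hint := integrableOn_rpow_mul_exp_neg_rpow hq two_pos
  have hval := integral_rpow_mul_exp_neg_rpow two_pos hq
  simp only [rpow_two] at hint hval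
  rw [← ofReal_integral_eq_lintegral_ofReal hint, hval, one_div_mul_eq_div]
  filter_upwards [ae_restrict_mem measurableSet_Ioi] with t ht
  exact mul_nonneg (rpow_nonneg (le_of_lt ht) _) (exp_pos _).le

theorem Gamma_add_one_div_Gamma_half {x : ℝ} (hx : -1 < x) :
    Gamma (x + 1) / Gamma ((x + 1) / 2) = 2 ^ x * Gamma (x / 2 + 1) / √π := by
  have hG : 0 < Gamma ((x + 1) / 2) := Gamma_pos_of_pos (by linarith)
  have hlegendre := Gamma_mul_Gamma_add_half ((x + 1) / 2)
  rw [show (x + 1) / 2 + 1 / 2 = x / 2 + 1 by ring, mul_div_cancel₀ _ two_ne_zero,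
    show 1 - (x + 1) = -x by ring, rpow_neg zero_le_two] at hlegendre
  field_simp at hlegendre ⊢
  linarith

theorem two_mul_rpow_neg_mul_rpow {a : ℝ} (ha : 0 < a) (x s : ℝ) :
    (2 * a) ^ (-s) * (2 ^ (x + s) * a ^ (x + s)) = 2 ^ x * a ^ x := by
  rw [← mul_rpow zero_le_two ha.le, ← rpow_add (by positivity), neg_add_cancel_comm_assoc,
    mul_rpow zero_le_two ha.le]

section Polar

variable {E : Type*} [NormedAddCommGroup E] [NormedSpace ℝ E] [FiniteDimensional ℝ E]
  [Nontrivial E] [MeasurableSpace E] [BorelSpace E] (μ : Measure E) [μ.IsAddHaarMeasure]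

theorem lintegral_eq_lintegral_toSphere {f : E → ENNReal} (hf : Measurable f) :
    ∫⁻ z, f z ∂μ = ∫⁻ u : sphere (0 : E) 1, (∫⁻ r in Set.Ioi (0 : ℝ),
      ENNReal.ofReal (r ^ (finrank ℝ E - 1 : ℝ)) * f (r • (u : E))) ∂μ.toSphere := by
  have hrpow (r : ℝ) : r ^ (finrank ℝ E - 1 : ℝ) = r ^ (finrank ℝ E - 1) := by
    rw [← rpow_natCast, Nat.cast_pred Module.finrank_pos]
  calc ∫⁻ z, f z ∂μ
      = ∫⁻ z : ({0}ᶜ : Set E), f z ∂μ.comap (↑) := by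
        rw [lintegral_subtype_comap (measurableSet_singleton _).compl f, restrict_compl_singleton]
    _ = ∫⁻ q : sphere (0 : E) 1 × Set.Ioi (0 : ℝ), f ((q.2 : ℝ) • (q.1 : E))
          ∂μ.toSphere.prod (.volumeIoiPow (finrank ℝ E - 1)) := by
        rw [← μ.measurePreserving_homeomorphUnitSphereProd.lintegral_comp_emb
          (Homeomorph.measurableEmbedding _)]
        refine lintegral_congr fun z ↦ ?_
        have hz : ‖(z : E)‖ ≠ 0 := norm_ne_zero_iff.2 z.2
        simp [smul_smul, hz]
    _ = _ := by
        rw [lintegral_prod _ (by fun_prop)]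
        refine lintegral_congr fun u ↦ ?_
        rw [Measure.volumeIoiPow,
          lintegral_withDensity_eq_lintegral_mul _ (by fun_prop) (by fun_prop)]
        simp only [Pi.mul_apply]
        rw [lintegral_subtype_comap measurableSet_Ioi
          fun r : ℝ ↦ ENNReal.ofReal (r ^ (finrank ℝ E - 1)) * f (r • (u : E))]
        simp_rw [hrpow]

theorem setLIntegral_norm_rpow_of_radial {A : Set E} (hA : MeasurableSet A)
    {ρ : sphere (0 : E) 1 → ℝ} (hρ : ∀ u, 0 ≤ ρ u)
    (hmem : ∀ (u : sphere (0 : E) 1) (r : ℝ), 0 < r → (r • (u : E) ∈ A ↔ r ≤ ρ u))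
    {s : ℝ} (hs : 0 < finrank ℝ E + s) :
    ∫⁻ z in A, ENNReal.ofReal (‖z‖ ^ s) ∂μ =
      ∫⁻ u, ENNReal.ofReal (ρ u ^ (finrank ℝ E + s) / (finrank ℝ E + s)) ∂μ.toSphere := by
  rw [← lintegral_indicator hA,
    lintegral_eq_lintegral_toSphere μ (Measurable.indicator (by fun_prop) hA)]
  refine lintegral_congr fun u ↦ ?_
  calc _ = ∫⁻ r in Set.Ioi (0 : ℝ), (Set.Ioc 0 (ρ u)).indicator
        (fun r ↦ ENNReal.ofReal (r ^ (finrank ℝ E - 1 + s))) r := by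
        refine setLIntegral_congr_fun measurableSet_Ioi fun r (hr : 0 < r) ↦ ?_
        simp only [Set.indicator, hmem u r hr, Set.mem_Ioc, hr, true_and]
        split_ifs
        · rw [norm_smul, norm_eq_of_mem_sphere, mul_one, norm_of_nonneg hr.le,
            ← ENNReal.ofReal_mul (by positivity), rpow_add hr]
        · rw [mul_zero]
    _ = _ := by
        rw [setLIntegral_indicator measurableSet_Ioc, Set.inter_eq_left.2 fun r hr ↦ hr.1,
          setLIntegral_Ioc_rpow (by linarith) (hρ u)]
        ring_nf

theorem lintegral_mul_exp_neg_norm_sq_of_homogeneous {f : E → ENNReal} (hf : Measurable f)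
    {p : ℝ} (hhom : ∀ (r : ℝ) (z : E), 0 < r → f (r • z) = ENNReal.ofReal (r ^ p) * f z)
    (hp : 0 < finrank ℝ E + p) :
    ∫⁻ z, f z * ENNReal.ofReal (exp (-‖z‖ ^ 2)) ∂μ =
      ENNReal.ofReal (Gamma ((finrank ℝ E + p) / 2) / 2) * ∫⁻ u, f (u : E) ∂μ.toSphere := by
  rw [lintegral_eq_lintegral_toSphere μ (by fun_prop), ← lintegral_const_mul _ (by fun_prop)]
  refine lintegral_congr fun u ↦ ?_
  calc _ = ∫⁻ r in Set.Ioi (0 : ℝ),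
        ENNReal.ofReal (r ^ (finrank ℝ E - 1 + p) * exp (-r ^ 2)) * f u := by
        refine setLIntegral_congr_fun measurableSet_Ioi fun r (hr : 0 < r) ↦ ?_
        rw [hhom r _ hr, norm_smul, norm_eq_of_mem_sphere, mul_one, norm_of_nonneg hr.le,
          rpow_add hr, ENNReal.ofReal_mul (by positivity), ENNReal.ofReal_mul (by positivity)]
        ring
    _ = _ := by
        rw [lintegral_mul_const _ (by fun_prop), setLIntegral_Ioi_rpow_mul_exp_neg_sq (by linarith)]
        ring_nf

end Polar

theorem exists_norm_eq_one_smul_eq {E : Type*} [NormedAddCommGroup E] [NormedSpace ℝ E]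
    [Nontrivial E] (x : E) : ∃ e : E, ‖e‖ = 1 ∧ ‖x‖ • e = x := by
  rcases eq_or_ne x 0 with rfl | hx
  · obtain ⟨e, he⟩ := exists_norm_eq E zero_le_one
    exact ⟨e, he, by simp⟩
  · exact ⟨‖x‖⁻¹ • x, norm_smul_inv_norm hx, smul_inv_smul₀ (norm_ne_zero_iff.2 hx) x⟩

section InnerProductSpace

variable {E : Type*} [NormedAddCommGroup E] [InnerProductSpace ℝ E]

theorem smul_mem_closedBall_norm_iff {x u : E} (hu : ‖u‖ = 1) {r : ℝ} (hr : 0 < r) :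
    r • u ∈ closedBall x ‖x‖ ↔ r ≤ 2 * max (inner ℝ x u) 0 := by
  have hsq : ‖r • u - x‖ ^ 2 = r * (r - 2 * inner ℝ x u) + ‖x‖ ^ 2 := by
    rw [norm_sub_sq_real, norm_smul, hu, real_inner_smul_left, real_inner_comm,
      norm_of_nonneg hr.le]
    ring
  rw [mem_closedBall_iff_norm, ← sq_le_sq₀ (norm_nonneg _) (norm_nonneg _), hsq,
    add_le_iff_nonpos_left, ← smul_eq_mul, smul_nonpos_iff_nonpos_of_pos_left hr, sub_nonpos,
    mul_max_of_nonneg _ _ zero_le_two, mul_zero, le_max_iff, or_iff_left hr.not_ge]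

theorem max_inner_smul_rpow {r : ℝ} (hr : 0 ≤ r) (x y : E) (p : ℝ) :
    max (inner ℝ x (r • y)) 0 ^ p = r ^ p * max (inner ℝ x y) 0 ^ p := by
  rw [real_inner_smul_right, ← mul_rpow hr (le_max_right _ _), mul_max_of_nonneg _ _ hr, mul_zero]

variable [FiniteDimensional ℝ E] [MeasurableSpace E] [BorelSpace E]

theorem lintegral_eq_lintegral_lintegral_orthogonal (K : Submodule ℝ E) {f : E → ENNReal}
    (hf : Measurable f) : ∫⁻ z, f z = ∫⁻ x : K, ∫⁻ y : Kᗮ, f (x + y) := by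
  rw [← K.orthogonalDecomposition.symm.measurePreserving.lintegral_comp hf,
    ← (WithLp.volume_preserving_toLp K Kᗮ).lintegral_comp (by fun_prop),
    Measure.volume_eq_prod, lintegral_prod _ (by fun_prop)]
  simp

theorem lintegral_exp_neg_norm_sq :
    ∫⁻ z : E, ENNReal.ofReal (exp (-‖z‖ ^ 2)) = ENNReal.ofReal (π ^ (finrank ℝ E / 2 : ℝ)) := by
  have hval := GaussianFourier.integral_rexp_neg_mul_sq_norm (V := E) one_pos
  simp only [neg_mul, one_mul, div_one] at hval
  rw [← ofReal_integral_eq_lintegral_ofReal _ (.of_forall fun _ ↦ (exp_pos _).le), hval]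
  exact .of_integral_ne_zero (hval ▸ by positivity)

theorem lintegral_eq_lintegral_lintegral_orthogonal_span_singleton {e : E} (he : ‖e‖ = 1)
    {f : E → ENNReal} (hf : Measurable f) :
    ∫⁻ z, f z = ∫⁻ t : ℝ, ∫⁻ y : (ℝ ∙ e)ᗮ, f (t • e + y) := by
  let ι := LinearIsometryEquiv.toSpanUnitSingleton (𝕜 := ℝ) e he
  have hι := ι.measurePreserving.lintegral_comp (f := fun x ↦ ∫⁻ y : (ℝ ∙ e)ᗮ, f (x + y))
    (Measurable.lintegral_prod_right (by fun_prop))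
  rw [lintegral_eq_lintegral_lintegral_orthogonal (ℝ ∙ e) hf, ← hι]
  simp only [ι, LinearIsometryEquiv.toSpanUnitSingleton_apply]

theorem lintegral_comp_inner_mul_exp_neg_norm_sq {e : E} (he : ‖e‖ = 1) {g : ℝ → ENNReal}
    (hg : Measurable g) :
    ∫⁻ z, g (inner ℝ e z) * ENNReal.ofReal (exp (-‖z‖ ^ 2)) =
      ENNReal.ofReal (π ^ ((finrank ℝ E - 1) / 2 : ℝ)) *
        ∫⁻ t, g t * ENNReal.ofReal (exp (-t ^ 2)) := by
  have hdim : (finrank ℝ (ℝ ∙ e)ᗮ : ℝ) = finrank ℝ E - 1 := by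
    have he0 : e ≠ 0 := norm_ne_zero_iff.1 (he ▸ one_ne_zero)
    rw [← (ℝ ∙ e).finrank_add_finrank_orthogonal, finrank_span_singleton he0]
    push_cast
    ring
  have hsplit (t : ℝ) (y : (ℝ ∙ e)ᗮ) :
      g (inner ℝ e (t • e + (y : E))) * ENNReal.ofReal (exp (-‖t • e + (y : E)‖ ^ 2)) =
        g t * ENNReal.ofReal (exp (-t ^ 2)) * ENNReal.ofReal (exp (-‖y‖ ^ 2)) := by
    have hey : inner ℝ e (y : E) = 0 := Submodule.mem_orthogonal_singleton_iff_inner_right.1 y.2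
    have hinner : inner ℝ e (t • e + (y : E)) = t := by
      rw [inner_add_right, real_inner_smul_right, real_inner_self_eq_norm_sq, he, hey]
      ring
    have hnorm : ‖t • e + (y : E)‖ ^ 2 = t ^ 2 + ‖y‖ ^ 2 := by
      rw [norm_add_sq_real, real_inner_smul_left, hey, norm_smul, he, mul_one, norm_eq_abs, sq_abs]
      simp
    rw [hinner, hnorm, neg_add, exp_add, ENNReal.ofReal_mul (exp_pos _).le, mul_assoc]
  have hmeas : Measurable fun y : (ℝ ∙ e)ᗮ ↦ ENNReal.ofReal (exp (-‖y‖ ^ 2)) := by fun_prop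
  rw [lintegral_eq_lintegral_lintegral_orthogonal_span_singleton he (by fun_prop)]
  simp_rw [hsplit, lintegral_const_mul _ hmeas]
  rw [lintegral_mul_const _ (by fun_prop), lintegral_exp_neg_norm_sq, hdim, mul_comm]

theorem lintegral_max_inner_rpow_mul_exp_neg_norm_sq {e : E} (he : ‖e‖ = 1) {p : ℝ}
    (hp : 0 < p) :
    ∫⁻ z, ENNReal.ofReal (max (inner ℝ e z) 0 ^ p) * ENNReal.ofReal (exp (-‖z‖ ^ 2)) =
      ENNReal.ofReal (π ^ ((finrank ℝ E - 1) / 2 : ℝ) * (Gamma ((p + 1) / 2) / 2)) := by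
  have hpos (t : ℝ) : ENNReal.ofReal (max t 0 ^ p) * ENNReal.ofReal (exp (-t ^ 2)) =
      (Set.Ioi 0).indicator (fun t ↦ ENNReal.ofReal (t ^ p * exp (-t ^ 2))) t := by
    rcases lt_or_ge 0 t with ht | ht
    · rw [Set.indicator_of_mem (Set.mem_Ioi.2 ht), max_eq_left ht.le,
        ENNReal.ofReal_mul (by positivity)]
    · rw [Set.indicator_of_notMem (Set.notMem_Ioi.2 ht), max_eq_right ht, zero_rpow hp.ne',
        ENNReal.ofReal_zero, zero_mul]
  rw [lintegral_comp_inner_mul_exp_neg_norm_sq he (g := fun t ↦ ENNReal.ofReal (max t 0 ^ p))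
    (by fun_prop)]
  simp_rw [hpos]
  rw [lintegral_indicator measurableSet_Ioi, setLIntegral_Ioi_rpow_mul_exp_neg_sq (by linarith),
    ENNReal.ofReal_mul (by positivity)]

variable [Nontrivial E]

theorem lintegral_toSphere_max_inner_rpow_of_norm_eq_one {e : E} (he : ‖e‖ = 1) {p : ℝ}
    (hp : 0 < p) :
    ∫⁻ u : sphere (0 : E) 1, ENNReal.ofReal (max (inner ℝ e (u : E)) 0 ^ p) ∂volume.toSphere =
      ENNReal.ofReal (π ^ ((finrank ℝ E - 1) / 2 : ℝ) * Gamma ((p + 1) / 2) /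
        Gamma ((finrank ℝ E + p) / 2)) := by
  have hG : 0 < Gamma ((finrank ℝ E + p) / 2) := Gamma_pos_of_pos (by positivity)
  have hpolar := lintegral_mul_exp_neg_norm_sq_of_homogeneous (volume : Measure E)
    (f := fun z ↦ ENNReal.ofReal (max (inner ℝ e z) 0 ^ p)) (p := p) (by fun_prop)
    (fun r z hr ↦ by rw [max_inner_smul_rpow hr.le, ENNReal.ofReal_mul (by positivity)])
    (by positivity)
  rw [lintegral_max_inner_rpow_mul_exp_neg_norm_sq he hp] at hpolar
  rw [← ENNReal.mul_right_inj (ENNReal.ofReal_pos.2 (half_pos hG)).ne' ENNReal.ofReal_ne_top,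
    ← hpolar, ← ENNReal.ofReal_mul (by positivity)]
  congr 1
  field_simp

theorem lintegral_toSphere_max_inner_rpow (x : E) {p : ℝ} (hp : 0 < p) :
    ∫⁻ u : sphere (0 : E) 1, ENNReal.ofReal (max (inner ℝ x (u : E)) 0 ^ p) ∂volume.toSphere =
      ENNReal.ofReal (π ^ ((finrank ℝ E - 1) / 2 : ℝ) * Gamma ((p + 1) / 2) /
        Gamma ((finrank ℝ E + p) / 2)) * ENNReal.ofReal (‖x‖ ^ p) := by
  obtain ⟨e, he, hx⟩ := exists_norm_eq_one_smul_eq x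
  have hscale (u : E) : ENNReal.ofReal (max (inner ℝ x u) 0 ^ p) =
      ENNReal.ofReal (max (inner ℝ e u) 0 ^ p) * ENNReal.ofReal (‖x‖ ^ p) := by
    rw [← hx, real_inner_comm, max_inner_smul_rpow (norm_nonneg x), hx, real_inner_comm, mul_comm,
      ENNReal.ofReal_mul (by positivity)]
  simp_rw [hscale]
  rw [lintegral_mul_const _ (by fun_prop), lintegral_toSphere_max_inner_rpow_of_norm_eq_one he hp]

theorem setLIntegral_dist_rpow_closedBall_norm (x : E) {s : ℝ} (hs : 0 < finrank ℝ E + s) :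
    ∫⁻ y in closedBall 0 ‖x‖, ENNReal.ofReal (dist x y ^ s) =
      ENNReal.ofReal (2 ^ (finrank ℝ E + s) / (finrank ℝ E + s) *
        (π ^ ((finrank ℝ E - 1) / 2 : ℝ) * Gamma ((finrank ℝ E + s + 1) / 2) /
          Gamma ((finrank ℝ E + (finrank ℝ E + s)) / 2))) *
        ENNReal.ofReal (‖x‖ ^ (finrank ℝ E + s)) := by
  have hρ (u : sphere (0 : E) 1) : 0 ≤ 2 * max (inner ℝ x (u : E)) 0 :=
    mul_nonneg zero_le_two (le_max_right _ _)
  calc ∫⁻ y in closedBall 0 ‖x‖, ENNReal.ofReal (dist x y ^ s)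
      = ∫⁻ z in closedBall x ‖x‖, ENNReal.ofReal (‖z‖ ^ s) := by
        rw [← lintegral_indicator Metric.isClosed_closedBall.measurableSet,
          ← lintegral_indicator Metric.isClosed_closedBall.measurableSet,
          ← lintegral_sub_left_eq_self _ x]
        simp only [Set.indicator, mem_closedBall_iff_norm', dist_eq_norm, sub_sub_cancel,
          zero_sub, norm_neg]
    _ = ∫⁻ u : sphere (0 : E) 1, ENNReal.ofReal ((2 * max (inner ℝ x (u : E)) 0) ^
          (finrank ℝ E + s) / (finrank ℝ E + s)) ∂volume.toSphere :=
        setLIntegral_norm_rpow_of_radial volume Metric.isClosed_closedBall.measurableSet hρ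
          (fun u r hr ↦ smul_mem_closedBall_norm_iff (norm_eq_of_mem_sphere u) hr) hs
    _ = ∫⁻ u : sphere (0 : E) 1, ENNReal.ofReal (2 ^ (finrank ℝ E + s) / (finrank ℝ E + s)) *
          ENNReal.ofReal (max (inner ℝ x (u : E)) 0 ^ (finrank ℝ E + s)) ∂volume.toSphere := by
        refine lintegral_congr fun u ↦ ?_
        rw [← ENNReal.ofReal_mul (by positivity), mul_rpow zero_le_two (le_max_right _ _),
          mul_div_right_comm]
    _ = _ := by
        rw [lintegral_const_mul _ (by fun_prop), lintegral_toSphere_max_inner_rpow x hs,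
          ENNReal.ofReal_mul (by positivity), mul_assoc]

theorem setLIntegral_norm_rpow_closedBall {a : ℝ} (ha : 0 < a) {p : ℝ}
    (hp : 0 < finrank ℝ E + p) :
    ∫⁻ x in closedBall (0 : E) a, ENNReal.ofReal (‖x‖ ^ p) =
      ENNReal.ofReal (finrank ℝ E * a ^ p / (finrank ℝ E + p)) * volume (closedBall (0 : E) a) := by
  have hmem (u : sphere (0 : E) 1) (r : ℝ) (hr : 0 < r) : r • (u : E) ∈ closedBall 0 a ↔ r ≤ a := by
    rw [mem_closedBall_zero_iff, norm_smul, norm_eq_of_mem_sphere, mul_one, norm_of_nonneg hr.le]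
  rw [setLIntegral_norm_rpow_of_radial volume Metric.isClosed_closedBall.measurableSet
    (fun _ ↦ ha.le) hmem hp, lintegral_const, Measure.toSphere_apply_univ,
    Measure.addHaar_closedBall volume 0 ha.le, ← mul_assoc, ← mul_assoc,
    ← ENNReal.ofReal_natCast (finrank ℝ E), ← ENNReal.ofReal_mul (by positivity),
    ← ENNReal.ofReal_mul (by positivity), rpow_add ha, rpow_natCast]
  congr 2
  ring

theorem lintegral_lintegral_closedBall_dist_rpow_eq_two_mul (a s : ℝ) :
    ∫⁻ x in closedBall (0 : E) a, ∫⁻ y in closedBall (0 : E) a, ENNReal.ofReal (dist x y ^ s) =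
      2 * ∫⁻ x in closedBall (0 : E) a, ∫⁻ y in closedBall 0 ‖x‖,
        ENNReal.ofReal (dist x y ^ s) := by
  rw [lintegral_lintegral_eq_two_mul_of_symm (h := norm) (by fun_prop)
    (fun x y ↦ by rw [dist_comm]) measurable_norm fun c ↦ ?_]
  · have hinter : ∀ x ∈ closedBall (0 : E) a,
        {y : E | ‖y‖ ≤ ‖x‖} ∩ closedBall 0 a = closedBall 0 ‖x‖ := by
      intro x hx
      ext y
      simp only [Set.mem_inter_iff, Set.mem_ofPred_eq, mem_closedBall_zero_iff] at hx ⊢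
      exact and_iff_left_of_imp hx.trans'
    congr 1
    refine setLIntegral_congr_fun Metric.isClosed_closedBall.measurableSet fun x hx ↦ ?_
    rw [Measure.restrict_restrict (measurableSet_le measurable_norm measurable_const), hinter x hx]
  · have hsphere : {y : E | ‖y‖ = c} = sphere 0 c := by
      ext y
      simp only [Set.mem_ofPred_eq, mem_sphere_zero_iff_norm]
    rw [hsphere]
    exact Measure.restrict_le_self.absolutelyContinuous (Measure.addHaar_sphere volume 0 c)

theorem lintegral_lintegral_closedBall_dist_rpow {a : ℝ} (ha : 0 < a) {s : ℝ}
    (hs : 0 < finrank ℝ E + s) :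
    ∫⁻ x in closedBall (0 : E) a, ∫⁻ y in closedBall (0 : E) a, ENNReal.ofReal (dist x y ^ s) =
      ENNReal.ofReal (2 * (2 ^ (finrank ℝ E + s) / (finrank ℝ E + s) *
        (π ^ ((finrank ℝ E - 1) / 2 : ℝ) * Gamma ((finrank ℝ E + s + 1) / 2) /
          Gamma ((finrank ℝ E + (finrank ℝ E + s)) / 2))) *
        (finrank ℝ E * a ^ (finrank ℝ E + s) / (finrank ℝ E + (finrank ℝ E + s)))) *
        volume (closedBall (0 : E) a) := by
  rw [lintegral_lintegral_closedBall_dist_rpow_eq_two_mul]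
  simp_rw [setLIntegral_dist_rpow_closedBall_norm _ hs]
  rw [lintegral_const_mul _ (by fun_prop), setLIntegral_norm_rpow_closedBall ha (by positivity),
    ← mul_assoc, ← mul_assoc, ← ENNReal.ofReal_ofNat 2, ← ENNReal.ofReal_mul zero_le_two,
    ← ENNReal.ofReal_mul (by positivity)]

-- The left-hand side is the constant of `lintegral_lintegral_closedBall_dist_rpow`, rescaled by
-- `(2 * a) ^ (-s)` and divided by the volume of the ball, in dimension `x`.
theorem scaled_energy_div_volume_eq_Gamma_quotient {a : ℝ} (ha : 0 < a) {x s : ℝ} (hx : 0 < x)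
    (hs : 0 < x + s) :
    (2 * a) ^ (-s) * (2 * (2 ^ (x + s) / (x + s) *
      (π ^ ((x - 1) / 2) * Gamma ((x + s + 1) / 2) / Gamma ((x + (x + s)) / 2))) *
      (x * a ^ (x + s) / (x + (x + s)))) / (a ^ x * (√π ^ x / Gamma (x / 2 + 1))) =
    x * Gamma (x + 1) / Gamma ((x + 1) / 2) *
      (Gamma ((x + s + 1) / 2) / ((x + s) * Gamma (x + s / 2 + 1))) := by
  have hstep : Gamma (x + s / 2 + 1) = (x + (x + s)) / 2 * Gamma ((x + (x + s)) / 2) := by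
    rw [← Gamma_add_one (by positivity)]
    ring_nf
  have hpi : π ^ ((x - 1) / 2) = √π ^ x / √π := by
    rw [sqrt_eq_rpow, ← rpow_mul pi_pos.le, ← rpow_sub pi_pos]
    ring_nf
  have hscale : (2 * a) ^ (-s) = 2 ^ x * a ^ x / (2 ^ (x + s) * a ^ (x + s)) :=
    eq_div_of_mul_eq (by positivity) (two_mul_rpow_neg_mul_rpow ha x s)
  rw [mul_div_assoc x (Gamma _), Gamma_add_one_div_Gamma_half (by linarith), hstep, hpi, hscale]
  field_simp

theorem setLAverage_setLAverage_dist_div_rpow {a : ℝ} (ha : 0 < a) {s : ℝ}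
    (hs : 0 < finrank ℝ E + s) :
    ⨍⁻ x in closedBall (0 : E) a, ⨍⁻ y in closedBall (0 : E) a,
      ENNReal.ofReal ((dist x y / (2 * a)) ^ s) ∂volume ∂volume =
      ENNReal.ofReal (finrank ℝ E * Gamma (finrank ℝ E + 1) / Gamma ((finrank ℝ E + 1) / 2) *
        (Gamma ((finrank ℝ E + s + 1) / 2) /
          ((finrank ℝ E + s) * Gamma (finrank ℝ E + s / 2 + 1)))) := by
  have hscale (x y : E) : ENNReal.ofReal ((dist x y / (2 * a)) ^ s) =
      ENNReal.ofReal ((2 * a) ^ (-s)) * ENNReal.ofReal (dist x y ^ s) := by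
    rw [← ENNReal.ofReal_mul (by positivity), div_rpow dist_nonneg (by positivity),
      rpow_neg (by positivity), inv_mul_eq_div]
  have hvol : volume (closedBall (0 : E) a) = ENNReal.ofReal
      (a ^ (finrank ℝ E : ℝ) * (√π ^ (finrank ℝ E : ℝ) / Gamma (finrank ℝ E / 2 + 1))) := by
    rw [InnerProductSpace.volume_closedBall, rpow_natCast, rpow_natCast,
      ENNReal.ofReal_mul (by positivity), ENNReal.ofReal_pow ha.le]
  have hn : 0 < (finrank ℝ E : ℝ) := mod_cast Module.finrank_pos
  have hV : volume (closedBall (0 : E) a) ≠ 0 := (Metric.measure_closedBall_pos volume 0 ha).ne'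
  have hV' : volume (closedBall (0 : E) a) ≠ ⊤ := measure_closedBall_lt_top.ne
  rw [← scaled_energy_div_volume_eq_Gamma_quotient ha hn hs,
    ENNReal.ofReal_div_of_pos (by positivity), ← hvol, ENNReal.ofReal_mul (by positivity)]
  simp_rw [setLAverage_eq, hscale, lintegral_const_mul' _ _ ENNReal.ofReal_ne_top, div_eq_mul_inv]
  rw [lintegral_mul_const' _ _ (ENNReal.inv_ne_top.2 hV),
    lintegral_const_mul' _ _ ENNReal.ofReal_ne_top, lintegral_lintegral_closedBall_dist_rpow ha hs,
    ← mul_assoc, ENNReal.mul_inv_cancel_right hV hV']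
  simp_rw [div_eq_mul_inv]

end InnerProductSpace

theorem lintegral_uniformBall {n : ℕ} {a : ℝ} (f : EuclideanSpace ℝ (Fin n) → ENNReal) :
    ∫⁻ x, f x ∂uniformBall n a = ⨍⁻ x in closedBall 0 a, f x ∂volume := by
  rw [laverage, uniformBall, Measure.restrict_apply_univ]

theorem lintegral_comp_of_indepFun {Ω α β : Type*} [MeasurableSpace Ω] [MeasurableSpace α]
    [MeasurableSpace β] {μ : Measure Ω} [IsFiniteMeasure μ] {X : Ω → α} {Y : Ω → β}
    (hX : Measurable X) (hY : Measurable Y) (hindep : IndepFun X Y μ) {k : α → β → ENNReal}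
    (hk : Measurable (Function.uncurry k)) :
    ∫⁻ ω, k (X ω) (Y ω) ∂μ = ∫⁻ x, ∫⁻ y, k x y ∂μ.map Y ∂μ.map X := by
  rw [lintegral_lintegral hk.aemeasurable,
    ← (indepFun_iff_map_prod_eq_prod_map_map hX.aemeasurable hY.aemeasurable).1 hindep]
  exact (lintegral_map hk (hX.prodMk hY)).symm

/-- If `X₁, X₂` are independent uniform points in the closed ball of radius `a` in `ℝⁿ`
(`n ≥ 1`) and `D = |X₁ - X₂|`, then for every real `s > -n`,
`E[(D/(2a))^s] = (n Γ(n+1)/Γ((n+1)/2)) · Γ((n+s+1)/2)/((n+s) Γ(n+s/2+1))`. -/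
theorem dist_in_ball_moment {Ω : Type*} [MeasurableSpace Ω] (μ : Measure Ω)
    [IsProbabilityMeasure μ]
    (n : ℕ) (hn : 1 ≤ n) (a : ℝ) (ha : 0 < a)
    (X₁ X₂ : Ω → EuclideanSpace ℝ (Fin n)) (hX₁ : Measurable X₁) (hX₂ : Measurable X₂)
    (hlaw₁ : Measure.map X₁ μ = uniformBall n a)
    (hlaw₂ : Measure.map X₂ μ = uniformBall n a)
    (hindep : IndepFun X₁ X₂ μ)
    (s : ℝ) (hs : s > -(n : ℝ)) :
    ∫ ω, (dist (X₁ ω) (X₂ ω) / (2 * a)) ^ s ∂μ =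
      (n : ℝ) * Gamma ((n : ℝ) + 1) / Gamma (((n : ℝ) + 1) / 2) *
        (Gamma (((n : ℝ) + s + 1) / 2) / (((n : ℝ) + s) * Gamma ((n : ℝ) + s / 2 + 1))) := by
  have : Nonempty (Fin n) := Fin.pos_iff_nonempty.1 hn
  have hns : 0 < (n : ℝ) + s := by linarith
  have hdim : (finrank ℝ (EuclideanSpace ℝ (Fin n)) : ℝ) = n := by rw [finrank_euclideanSpace_fin]
  have hmoment : ∫⁻ ω, ENNReal.ofReal ((dist (X₁ ω) (X₂ ω) / (2 * a)) ^ s) ∂μ = ENNReal.ofReal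
      (n * Gamma (n + 1) / Gamma ((n + 1) / 2) *
        (Gamma ((n + s + 1) / 2) / ((n + s) * Gamma (n + s / 2 + 1)))) := by
    rw [lintegral_comp_of_indepFun hX₁ hX₂ hindep
      (k := fun x y ↦ ENNReal.ofReal ((dist x y / (2 * a)) ^ s)) (by fun_prop), hlaw₁, hlaw₂]
    simp_rw [lintegral_uniformBall]
    rw [setLAverage_setLAverage_dist_div_rpow ha (by rwa [hdim]), hdim]
  rw [integral_eq_lintegral_of_nonneg_ae (.of_forall fun ω ↦ by positivity)
    (Measurable.aestronglyMeasurable (by fun_prop)), hmoment, ENNReal.toReal_ofReal]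
  have := Gamma_pos_of_pos (s := n + s / 2 + 1) (by linarith)
  positivity
end

section
/- Let 0 < α ≤ 2 and let X be a real random variable whose characteristic function is E[e^{itX}] = e^{-|t|^α} for all real t (a symmetric α-stable variable). Then for every real s with -1 < s < α, E[|X|^s] = 2^s Γ((1+s)/2) Γ(1 - s/α) / (√π Γ(1 - s/2)). -/
open MeasureTheory ProbabilityTheory Real Complex

/-!
Let `Z` be normal with mean `0` and variance `2`, and let `E` be exponential with rate `1`,
independent of both `X` and `Z`. Exchanging the order of integration gives
`𝔼[exp(-(tX)²)] = 𝔼[exp(-|tZ|^α)]` for all `t > 0`. Since `P(E > u) = exp(-u)` for `u ≥ 0`, the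
two sides are `P(|X| / √E < 1/t)` and `P(|Z| / E^(1/α) < 1/t)`, so `|X| / √E` and `|Z| / E^(1/α)`
have the same law. Comparing moments of order `s`, where `𝔼[E^(-p)] = Γ(1 - p)`, yields
`𝔼[|X|^s] Γ(1 - s/2) = 𝔼[|Z|^s] Γ(1 - s/α)`, and the absolute moments of `Z` are classical.
-/

theorem integral_charFun_comm {E : Type*} [NormedAddCommGroup E] [InnerProductSpace ℝ E]
    [MeasurableSpace E] [BorelSpace E] [SecondCountableTopology E] (μ ν : Measure E)
    [IsFiniteMeasure μ] [IsFiniteMeasure ν] :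
    ∫ t, charFun μ t ∂ν = ∫ x, charFun ν x ∂μ := by
  simp only [charFun_apply]
  rw [integral_integral_swap]
  · simp only [real_inner_comm]
  · refine .of_bound (C := 1) (by unfold Function.uncurry; fun_prop) (ae_of_all _ fun p ↦ ?_)
    simp [Function.uncurry, Complex.norm_exp_ofReal_mul_I]

theorem integral_exp_neg_sq_eq_integral_charFun_gaussianReal (μ : Measure ℝ) [IsFiniteMeasure μ]
    (t : ℝ) :
    ((∫ x, Real.exp (-(t * x) ^ 2) ∂μ : ℝ) : ℂ) = ∫ z, charFun μ (t * z) ∂gaussianReal 0 2 := by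
  have charFun_gaussian (y : ℝ) : charFun (gaussianReal 0 2) y = (Real.exp (-y ^ 2) : ℝ) := by
    simp [charFun_gaussianReal]
  simp only [← charFun_map_mul]
  rw [integral_charFun_comm, integral_map (by fun_prop) (by fun_prop)]
  simp only [charFun_gaussian, integral_complex_ofReal]

theorem integral_exp_neg_sq_of_charFun_eq_exp_neg_abs_rpow {μ : Measure ℝ} [IsFiniteMeasure μ]
    {α t : ℝ} (hμ : ∀ u : ℝ, charFun μ u = (Real.exp (-|u| ^ α) : ℝ)) (ht : 0 < t) :
    ∫ x, Real.exp (-(t * |x|) ^ (2 : ℝ)) ∂μ =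
      ∫ z, Real.exp (-(t * |z|) ^ α) ∂gaussianReal 0 2 := by
  have h := integral_exp_neg_sq_eq_integral_charFun_gaussianReal μ t
  simp only [hμ, integral_complex_ofReal, abs_mul, abs_of_pos ht] at h
  simpa only [Real.rpow_two, mul_pow, sq_abs] using Complex.ofReal_injective h

theorem integral_abs_rpow_gaussianReal {v : NNReal} (hv : v ≠ 0) {s : ℝ} (hs : -1 < s) :
    ∫ z, |z| ^ s ∂gaussianReal 0 v = √(2 * v) ^ s * Real.Gamma ((1 + s) / 2) / √π := by
  have hv' : (0 : ℝ) < 2 * v := by positivity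
  have density (z : ℝ) : gaussianPDFReal 0 v z • |z| ^ s =
      (√(2 * π * v))⁻¹ * (|z| ^ s * Real.exp (-(2 * v : ℝ)⁻¹ * |z| ^ (2 : ℝ))) := by
    simp only [gaussianPDFReal, sub_zero, smul_eq_mul, Real.rpow_two, sq_abs, neg_mul,
      div_eq_inv_mul, mul_neg]
    ring
  calc ∫ z, |z| ^ s ∂gaussianReal 0 v
      = (√(2 * π * v))⁻¹ * ∫ z, |z| ^ s * Real.exp (-(2 * v : ℝ)⁻¹ * |z| ^ (2 : ℝ)) := by
        simp only [integral_gaussianReal_eq_integral_smul hv, density, integral_const_mul]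
    _ = (√(2 * π * v))⁻¹ * ((2 * v) ^ ((1 + s) / 2) * Real.Gamma ((1 + s) / 2)) := by
        rw [integral_comp_abs (f := fun y ↦ y ^ s * Real.exp (-(2 * v : ℝ)⁻¹ * y ^ (2 : ℝ))),
          _root_.integral_rpow_mul_exp_neg_mul_rpow two_pos hs (inv_pos.2 hv'), neg_div,
          Real.inv_rpow hv'.le, Real.rpow_neg hv'.le, inv_inv, add_comm s 1]
        ring
    _ = √(2 * v) ^ s * Real.Gamma ((1 + s) / 2) / √π := by
        rw [show 2 * π * v = 2 * v * π by ring, Real.sqrt_mul hv'.le, add_div, Real.rpow_add hv',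
          ← Real.sqrt_eq_rpow, Real.rpow_div_two_eq_sqrt s hv'.le]
        field_simp

theorem ae_pos_gammaMeasure (a r : ℝ) : ∀ᵐ y ∂gammaMeasure a r, 0 < y := by
  rw [gammaMeasure, ae_withDensity_iff (by unfold gammaPDF; fun_prop)]
  filter_upwards [Measure.ae_ne volume 0] with y hy hpdf
  exact lt_of_le_of_ne (not_lt.1 fun h ↦ hpdf (gammaPDF_of_neg h)) hy.symm

theorem integral_rpow_gammaMeasure {a r s : ℝ} (ha : 0 < a) (hr : 0 < r) (has : 0 < a + s) :
    ∫ y, y ^ s ∂gammaMeasure a r = Real.Gamma (a + s) / (r ^ s * Real.Gamma a) := by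
  have density : ∀ y ∈ Set.Ioi (0 : ℝ), (gammaPDF a r y).toReal • y ^ s =
      r ^ a / Real.Gamma a * (y ^ (a + s - 1) * Real.exp (-(r * y))) := by
    intro y (hy : 0 < y)
    rw [gammaPDF, ENNReal.toReal_ofReal (gammaPDFReal_nonneg ha hr y), gammaPDFReal, if_pos hy.le,
      add_sub_right_comm, Real.rpow_add hy, smul_eq_mul]
    ring
  calc ∫ y, y ^ s ∂gammaMeasure a r
      = ∫ y in Set.Ioi (0 : ℝ), y ^ s ∂gammaMeasure a r := by
        rw [Measure.restrict_eq_self_of_ae_mem (s := Set.Ioi 0) (ae_pos_gammaMeasure a r)]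
    _ = ∫ y in Set.Ioi (0 : ℝ), (gammaPDF a r y).toReal • y ^ s :=
        setIntegral_withDensity_eq_setIntegral_toReal_smul (by unfold gammaPDF; fun_prop)
          (by simp [gammaPDF]) _ measurableSet_Ioi
    _ = r ^ a / Real.Gamma a * ((1 / r) ^ (a + s) * Real.Gamma (a + s)) := by
        rw [setIntegral_congr_fun measurableSet_Ioi density, integral_const_mul,
          Real.integral_rpow_mul_exp_neg_mul_Ioi has hr]
    _ = Real.Gamma (a + s) / (r ^ s * Real.Gamma a) := by
        rw [one_div, Real.inv_rpow hr.le, Real.rpow_add hr]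
        field_simp

theorem expMeasure_Iic {r x : ℝ} (hr : 0 < r) (hx : 0 ≤ x) :
    expMeasure r (Set.Iic x) = ENNReal.ofReal (1 - Real.exp (-(r * x))) := by
  have := isProbabilityMeasure_expMeasure hr
  rw [← ofReal_cdf, cdf_expMeasure_eq hr, if_pos hx]

/-- The law of `|X| / E ^ (1 / a)`, where `X` has law `μ` and `E` is an exponential variable of rate
`1` independent of `X`. Its values on half-lines are Laplace-type transforms of `μ`
(`expQuotient_Ici_inv`), while its moments are multiples of those of `|X|`. -/
noncomputable def expQuotient (a : ℝ) (μ : Measure ℝ) : Measure ℝ :=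
  (μ.prod (expMeasure 1)).map fun p ↦ |p.1| / p.2 ^ a⁻¹

section ExpQuotient

variable {a b s t : ℝ} {μ ν : Measure ℝ}

theorem ae_prod_expMeasure_snd_pos : ∀ᵐ p ∂μ.prod (expMeasure 1), 0 < p.2 :=
  Measure.quasiMeasurePreserving_snd.ae (ae_pos_gammaMeasure 1 1)

theorem expQuotient_Ici_of_nonpos [IsProbabilityMeasure μ] (ht : t ≤ 0) :
    expQuotient a μ (Set.Ici t) = 1 := by
  have := isProbabilityMeasure_expMeasure one_pos
  rw [expQuotient, Measure.map_apply (by fun_prop) measurableSet_Ici,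
    ← mem_ae_iff_prob_eq_one (measurableSet_Ici.preimage (by fun_prop))]
  filter_upwards [ae_prod_expMeasure_snd_pos] with p hp
  exact ht.trans (by positivity)

theorem expQuotient_Ici_inv [IsProbabilityMeasure μ] (ha : 0 < a) (ht : 0 < t) :
    expQuotient a μ (Set.Ici t⁻¹) =
      ENNReal.ofReal (1 - ∫ x, Real.exp (-(t * |x|) ^ a) ∂μ) := by
  have := isProbabilityMeasure_expMeasure one_pos
  have fiber (x : ℝ) : expMeasure 1 {y | t⁻¹ ≤ |x| / y ^ a⁻¹} =
      ENNReal.ofReal (1 - Real.exp (-(t * |x|) ^ a)) := by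
    rw [← one_mul ((t * |x|) ^ a), ← expMeasure_Iic one_pos (by positivity)]
    refine measure_congr (Filter.eventuallyEq_set.2 ?_)
    filter_upwards [ae_pos_gammaMeasure 1 1] with y hy
    change t⁻¹ ≤ |x| / y ^ a⁻¹ ↔ y ≤ (t * |x|) ^ a
    rw [← Real.rpow_inv_le_iff_of_pos hy.le (by positivity) ha, le_div_iff₀ (by positivity),
      inv_mul_le_iff₀ ht]
  have integrable_exp : Integrable (fun x ↦ Real.exp (-(t * |x|) ^ a)) μ :=
    .of_bound (C := 1) (by fun_prop : Measurable _).aestronglyMeasurable (ae_of_all _ fun x ↦ by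
      rw [Real.norm_of_nonneg (by positivity), Real.exp_le_one_iff, neg_nonpos]
      positivity)
  calc expQuotient a μ (Set.Ici t⁻¹)
      = ∫⁻ x, ENNReal.ofReal (1 - Real.exp (-(t * |x|) ^ a)) ∂μ := by
        rw [expQuotient, Measure.map_apply (by fun_prop) measurableSet_Ici,
          Measure.prod_apply (measurableSet_Ici.preimage (by fun_prop))]
        exact lintegral_congr fiber
    _ = ENNReal.ofReal (1 - ∫ x, Real.exp (-(t * |x|) ^ a) ∂μ) := by
        rw [← ofReal_integral_eq_lintegral_ofReal (by fun_prop) (ae_of_all _ fun x ↦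
            sub_nonneg.2 (Real.exp_le_one_iff.2 (neg_nonpos.2 (by positivity)))),
          integral_sub (integrable_const 1) integrable_exp, integral_const, probReal_univ,
          one_smul]

theorem expQuotient_eq_of_integral_exp_neg_rpow_eq [IsProbabilityMeasure μ]
    [IsProbabilityMeasure ν] (ha : 0 < a) (hb : 0 < b)
    (h : ∀ t > 0, ∫ x, Real.exp (-(t * |x|) ^ a) ∂μ = ∫ x, Real.exp (-(t * |x|) ^ b) ∂ν) :
    expQuotient a μ = expQuotient b ν := by
  have := isProbabilityMeasure_expMeasure one_pos
  have : IsFiniteMeasure (expQuotient a μ) := by unfold expQuotient; infer_instance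
  refine Measure.ext_of_Ici _ _ fun u ↦ ?_
  rcases le_or_gt u 0 with hu | hu
  · rw [expQuotient_Ici_of_nonpos hu, expQuotient_Ici_of_nonpos hu]
  · rw [← inv_inv u, expQuotient_Ici_inv ha (inv_pos.2 hu), expQuotient_Ici_inv hb (inv_pos.2 hu),
      h _ (inv_pos.2 hu)]

-- The convention `0 ^ s = 0` for `s < 0` discards an atom of `μ` at `0` on both sides, and a
-- divergent integral is `0` on both sides.
theorem integral_rpow_expQuotient [SFinite μ] (ha : 0 < a) (hs : s < a) :
    ∫ r, r ^ s ∂expQuotient a μ = (∫ x, |x| ^ s ∂μ) * Real.Gamma (1 - s / a) := by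
  have := isProbabilityMeasure_expMeasure one_pos
  have hsa : 0 < 1 + -(s / a) := by rw [← sub_eq_add_neg, sub_pos, div_lt_one ha]; exact hs
  calc ∫ r, r ^ s ∂expQuotient a μ
      = ∫ p, |p.1| ^ s * p.2 ^ (-(s / a)) ∂μ.prod (expMeasure 1) := by
        rw [expQuotient, integral_map (by fun_prop) (by fun_prop)]
        refine integral_congr_ae ?_
        filter_upwards [ae_prod_expMeasure_snd_pos] with p hp
        rw [Real.div_rpow (by positivity) (by positivity), ← Real.rpow_mul hp.le,
          Real.rpow_neg hp.le, div_eq_mul_inv, inv_mul_eq_div]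
    _ = (∫ x, |x| ^ s ∂μ) * ∫ y, y ^ (-(s / a)) ∂expMeasure 1 :=
        integral_prod_mul (fun x ↦ |x| ^ s) fun y ↦ y ^ (-(s / a))
    _ = (∫ x, |x| ^ s ∂μ) * Real.Gamma (1 - s / a) := by
        rw [expMeasure, integral_rpow_gammaMeasure one_pos one_pos hsa]
        simp [sub_eq_add_neg]

end ExpQuotient

/-- If `X` is a symmetric `α`-stable random variable (`0 < α ≤ 2`), i.e. its characteristic
function is `E[e^(itX)] = e^(-|t|^α)`, then for every real `s` with `-1 < s < α`,
`E[|X|^s] = 2^s Γ((1+s)/2) Γ(1 - s/α) / (√π Γ(1 - s/2))`. -/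
theorem symmetric_stable_abs_moment {Ω : Type*} [MeasurableSpace Ω] (μ : Measure Ω)
    [IsProbabilityMeasure μ]
    (α : ℝ) (hα₁ : 0 < α) (hα₂ : α ≤ 2)
    (X : Ω → ℝ) (hX : Measurable X)
    (hchar : ∀ t : ℝ,
      ∫ ω, Complex.exp (Complex.I * (t : ℂ) * (X ω : ℂ)) ∂μ =
        ((Real.exp (-|t| ^ α) : ℝ) : ℂ))
    (s : ℝ) (hs₁ : -1 < s) (hs₂ : s < α) :
    ∫ ω, |X ω| ^ s ∂μ =
      2 ^ s * Real.Gamma ((1 + s) / 2) * Real.Gamma (1 - s / α) /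
        (Real.sqrt π * Real.Gamma (1 - s / 2)) := by
  have : IsProbabilityMeasure (μ.map X) := Measure.isProbabilityMeasure_map hX.aemeasurable
  have charFun_X (t : ℝ) : charFun (μ.map X) t = (Real.exp (-|t| ^ α) : ℝ) := by
    rw [charFun_apply_real, integral_map hX.aemeasurable (by fun_prop), ← hchar t]
    simp only [mul_comm, mul_left_comm]
  have quotient_law : expQuotient 2 (μ.map X) = expQuotient α (gaussianReal 0 2) :=
    expQuotient_eq_of_integral_exp_neg_rpow_eq two_pos hα₁ fun _ ↦
      integral_exp_neg_sq_of_charFun_eq_exp_neg_abs_rpow charFun_X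
  have X_moment : ∫ x, |x| ^ s ∂μ.map X = ∫ ω, |X ω| ^ s ∂μ :=
    integral_map hX.aemeasurable (by fun_prop : Measurable _).aestronglyMeasurable
  have Z_moment : ∫ z, |z| ^ s ∂gaussianReal 0 2 = 2 ^ s * Real.Gamma ((1 + s) / 2) / √π := by
    simpa using integral_abs_rpow_gaussianReal two_ne_zero hs₁
  have moments : (∫ ω, |X ω| ^ s ∂μ) * Real.Gamma (1 - s / 2) =
      2 ^ s * Real.Gamma ((1 + s) / 2) / √π * Real.Gamma (1 - s / α) := by
    rw [← X_moment, ← Z_moment, ← integral_rpow_expQuotient two_pos (hs₂.trans_le hα₂),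
      quotient_law, integral_rpow_expQuotient hα₁ hs₂]
  have Gamma_pos : 0 < Real.Gamma (1 - s / 2) := Real.Gamma_pos_of_pos (by linarith)
  rw [← div_div, eq_div_iff Gamma_pos.ne', moments]
  ring
end
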